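/- arXiv:math-ph/9810018 — 4 statements merged into one kernel-verified Lean document; each statement's English description precedes it below -/
import Mathlib

section
/- Let u : ℝ → ℂ be continuously differentiable, let χ : ℝ → ℝ be continuously differentiable with compact support, and let x ∈ ℝ satisfy χ(x) = 1. Then |u(x)|² ≤ 2·‖χu‖_{L²(ℝ)}·‖(χu)'‖_{L²(ℝ)}. Equivalently, with D = (ħ/i)(d/dx) for ħ > 0, |u(x)|² ≤ 2ħ^{-1}·‖χu‖_{L²(ℝ)}·‖D(χu)‖_{L²(ℝ)}. -/
/-!
Write `w = χu`, a `C¹` function of compact support. Since `‖w‖²` vanishes near `-∞` and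
`(‖w‖²)' = 2 ⟪w, w'⟫`, the fundamental theorem of calculus gives
`‖w x‖² = ∫_{-∞}^x 2 ⟪w, w'⟫ ≤ 2 ∫ ‖w‖ ‖w'‖`, and the Cauchy–Schwarz inequality in `L²(ℝ)`
concludes (`norm_sq_le_of_hasCompactSupport`). The semiclassical form follows because
`‖D w‖ = ħ ‖w'‖` pointwise.
-/

open MeasureTheory

/-- The one-dimensional trace inequality for compactly supported `C¹` functions. -/
lemma norm_sq_le_of_hasCompactSupport (w : ℝ → ℂ) (hw : ContDiff ℝ 1 w)
    (hc : HasCompactSupport w) (x : ℝ) :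
    ‖w x‖ ^ 2 ≤ 2 * Real.sqrt (∫ t : ℝ, ‖w t‖ ^ 2) *
        Real.sqrt (∫ t : ℝ, ‖deriv w t‖ ^ 2) := by
  have hw' : Continuous (deriv w) := hw.continuous_deriv le_rfl
  have hc' : HasCompactSupport (deriv w) := hc.deriv
  have hgc : HasCompactSupport (fun t => ‖w t‖ ^ 2) :=
    hc.comp_left (g := fun z : ℂ => ‖z‖ ^ 2) (by simp)
  have hg : ContDiff ℝ 1 (fun t => ‖w t‖ ^ 2) := hw.norm_sq ℝ
  have hderiv (t : ℝ) : deriv (fun t => ‖w t‖ ^ 2) t ≤ 2 * (‖w t‖ * ‖deriv w t‖) := by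
    have h := ((hw.differentiable one_ne_zero t).hasDerivAt.norm_sq).deriv
    rw [h]
    gcongr
    exact real_inner_le_norm _ _
  have hint : Integrable (fun t => 2 * (‖w t‖ * ‖deriv w t‖)) := by
    refine Continuous.integrable_of_hasCompactSupport (by have := hw.continuous; fun_prop) ?_
    exact (hc.norm.mul_right (f' := fun t => ‖deriv w t‖)).mul_left (f := fun _ => (2 : ℝ))
  have hgint : Integrable (deriv (fun t => ‖w t‖ ^ 2)) :=
    (hg.continuous_deriv le_rfl).integrable_of_hasCompactSupport hgc.deriv
  have hCS := integral_mul_le_Lp_mul_Lq_of_nonneg (μ := (volume : Measure ℝ))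
    Real.HolderConjugate.two_two
    (f := fun t => ‖w t‖) (g := fun t => ‖deriv w t‖)
    (.of_forall fun _ => norm_nonneg _) (.of_forall fun _ => norm_nonneg _)
    (hw.continuous.norm.memLp_of_hasCompactSupport hc.norm)
    (hw'.norm.memLp_of_hasCompactSupport hc'.norm)
  simp only [Real.rpow_two, ← Real.sqrt_eq_rpow] at hCS
  calc ‖w x‖ ^ 2 = ∫ t in Set.Iic x, deriv (fun t => ‖w t‖ ^ 2) t :=
        (hgc.integral_Iic_deriv_eq hg x).symm
    _ ≤ ∫ t in Set.Iic x, 2 * (‖w t‖ * ‖deriv w t‖) :=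
        setIntegral_mono hgint.integrableOn hint.integrableOn hderiv
    _ ≤ ∫ t, 2 * (‖w t‖ * ‖deriv w t‖) :=
        setIntegral_le_integral hint (.of_forall fun _ => by positivity)
    _ = 2 * ∫ t, ‖w t‖ * ‖deriv w t‖ := integral_const_mul _ _
    _ ≤ _ := by rw [mul_assoc]; gcongr

/-- The trace estimate (3) of the paper: the pointwise value of `u` at a point
where the cutoff `χ` equals `1` is controlled by the `L²` norms of `χu` and of
its derivative (equivalently, of `D(χu)` with `D = (ħ/i) d/dx`). -/
theorem trace_estimate
    (u : ℝ → ℂ) (hu : ContDiff ℝ 1 u)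
    (χ : ℝ → ℝ) (hχ : ContDiff ℝ 1 χ) (hχc : HasCompactSupport χ)
    (x : ℝ) (hx : χ x = 1) (hbar : ℝ) (hhbar : 0 < hbar) :
    ‖u x‖ ^ 2 ≤ 2 * Real.sqrt (∫ t : ℝ, ‖(χ t : ℂ) * u t‖ ^ 2) *
        Real.sqrt (∫ t : ℝ, ‖deriv (fun s : ℝ => (χ s : ℂ) * u s) t‖ ^ 2) ∧
    ‖u x‖ ^ 2 ≤ 2 * hbar⁻¹ * Real.sqrt (∫ t : ℝ, ‖(χ t : ℂ) * u t‖ ^ 2) *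
        Real.sqrt (∫ t : ℝ,
          ‖((hbar : ℂ) / Complex.I) * deriv (fun s : ℝ => (χ s : ℂ) * u s) t‖ ^ 2) := by
  have hw : ContDiff ℝ 1 (fun s : ℝ => (χ s : ℂ) * u s) :=
    (Complex.ofRealCLM.contDiff.comp hχ).mul hu
  have hc : HasCompactSupport (fun s : ℝ => (χ s : ℂ) * u s) :=
    (hχc.comp_left (g := fun r : ℝ => (r : ℂ)) Complex.ofReal_zero).mul_right
  have h := norm_sq_le_of_hasCompactSupport _ hw hc x
  simp only [hx, Complex.ofReal_one, one_mul] at h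
  refine ⟨h, h.trans_eq ?_⟩
  have hD (z : ℂ) : ‖((hbar : ℂ) / Complex.I) * z‖ ^ 2 = hbar ^ 2 * ‖z‖ ^ 2 := by
    simp [mul_pow]
  simp only [hD]
  rw [integral_const_mul, Real.sqrt_mul (sq_nonneg _), Real.sqrt_sq hhbar.le]
  field_simp
end

section
/- Let ħ > 0, β ∈ ℝ, a ∈ ℝ, z ∈ ℂ, c > 0, and let q : (a, ∞) → ℂ be continuous with −Im( e^{2iβ}(q(x) − z) ) ≥ c for all x > a. Then for every twice continuously differentiable u : ℝ → ℂ with compact support contained in (a, ∞), one has ‖ −ħ² e^{−2iβ} u'' + (q − z)·u ‖_{L²} ≥ c·‖u‖_{L²}. -/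
/-!
Write `F = -ħ² e^{-2iβ} u'' + (q - z) u`. Multiplying `e^{2iβ} F` by `conj u` and taking imaginary
parts gives, on `(a, ∞)`,
`c |u|² ≤ -Im (e^{2iβ} F conj u) - ħ² Im (u'' conj u) ≤ |F| |u| - ħ² (Im (u' conj u))'`,
since `Im (u' conj u') = 0`. With `2c |F| |u| ≤ |F|² + c² |u|²` this becomes the pointwise bound
`c² |u|² ≤ |F|² - 2 c ħ² (Im (u' conj u))'`, valid also off the support of `u`. The derivative of a
compactly supported function integrates to zero, so integration yields `c² ‖u‖² ≤ ‖F‖²`. Using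
Young's inequality pointwise replaces the Cauchy–Schwarz inequality for integrals.
-/

open MeasureTheory

open ComplexConjugate in
/-- The pointwise bound to be integrated, for an arbitrary unimodular factor `e`
(with inverse `e'`); `w` stands for `u''` and `p` for `q - z`. -/
lemma coercivity_pointwise (e e' u w p : ℂ) (h c : ℝ) (hc : 0 < c) (hee : e * e' = 1)
    (he : ‖e‖ = 1) (hp : u = 0 ∨ c ≤ -(e * p).im) :
    c ^ 2 * ‖u‖ ^ 2 ≤
      ‖-(h : ℂ) ^ 2 * e' * w + p * u‖ ^ 2 - 2 * c * h ^ 2 * (w * conj u).im := by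
  rcases hp with rfl | hp
  · simp
    positivity
  set F := -(h : ℂ) ^ 2 * e' * w + p * u with hF
  have h1 : e * F * conj u
      = -((h ^ 2 : ℝ) : ℂ) * (w * conj u) + (e * p) * ((‖u‖ ^ 2 : ℝ) : ℂ) := by
    have h2 : ((‖u‖ ^ 2 : ℝ) : ℂ) = u * conj u := by
      rw [Complex.mul_conj, Complex.normSq_eq_norm_sq]
    rw [h2, hF]
    push_cast
    linear_combination (-(h : ℂ) ^ 2 * w * conj u) * hee
  have h3 : (e * F * conj u).im
      = -(h ^ 2) * (w * conj u).im + (e * p).im * ‖u‖ ^ 2 := by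
    rw [h1, Complex.add_im, Complex.im_mul_ofReal, ← Complex.ofReal_neg, Complex.im_ofReal_mul]
  have h4 : -(e * F * conj u).im ≤ ‖F‖ * ‖u‖ := by
    have := (neg_le_abs _).trans (Complex.abs_im_le_norm (e * F * conj u))
    simpa [he] using this
  have h5 : c * ‖u‖ ^ 2 ≤ -(e * p).im * ‖u‖ ^ 2 := by gcongr
  nlinarith [sq_nonneg (‖F‖ - c * ‖u‖)]

open ComplexConjugate in
/-- Vanishing of the imaginary part of the kinetic term: `Im (u'' conj u)` is the derivative of the
compactly supported function `Im (u' conj u)`. -/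
lemma integral_im_iteratedDeriv_two_mul_conj (u : ℝ → ℂ) (hu : ContDiff ℝ 2 u)
    (hs : HasCompactSupport u) :
    Integrable (fun t => (iteratedDeriv 2 u t * conj (u t)).im) ∧
      ∫ t : ℝ, (iteratedDeriv 2 u t * conj (u t)).im = 0 := by
  have hw : Continuous (iteratedDeriv 2 u) := hu.continuous_iteratedDeriv 2 le_rfl
  have hd : ContDiff ℝ 1 (deriv u) := by
    have : ContDiff ℝ (1 + 1) u := by simpa [one_add_one_eq_two] using hu
    exact (contDiff_succ_iff_deriv.1 this).2.2
  have hcs : ∀ f : ℝ → ℂ, HasCompactSupport (fun t => (f t * conj (u t)).im) := fun f =>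
    hs.mono' (by
      refine Set.Subset.trans ?_ subset_closure
      intro t ht h0
      apply ht
      simp [h0])
  have hI : Integrable (fun t => (iteratedDeriv 2 u t * conj (u t)).im) :=
    Continuous.integrable_of_hasCompactSupport
      (Complex.continuous_im.comp (hw.mul (Complex.continuous_conj.comp hu.continuous))) (hcs _)
  refine ⟨hI, ?_⟩
  refine integral_eq_zero_of_hasDerivAt_of_integrable
    (f := fun t => (deriv u t * conj (u t)).im) (fun t => ?_) hI
    (Continuous.integrable_of_hasCompactSupport (Complex.continuous_im.comp
      (hd.continuous.mul (Complex.continuous_conj.comp hu.continuous))) (hcs _))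
  have h1 : HasDerivAt u (deriv u t) t := (hu.differentiable (by norm_num) t).hasDerivAt
  have h2 : HasDerivAt (deriv u) (iteratedDeriv 2 u t) t := by
    rw [iteratedDeriv_succ, iteratedDeriv_one]
    exact (hd.differentiable (by norm_num) t).hasDerivAt
  have h3 : HasDerivAt (fun t => conj (u t)) (conj (deriv u t)) t := h1.star
  have h4 := Complex.imCLM.hasFDerivAt.comp_hasDerivAt t (h2.mul h3)
  convert h4 using 1
  · rfl
  · rw [Complex.imCLM_apply, Complex.add_im, Complex.mul_conj, Complex.ofReal_im, add_zero]

lemma integrable_norm_sq {f : ℝ → ℂ} (hf : Continuous f) (hfs : HasCompactSupport f) :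
    Integrable (fun t => ‖f t‖ ^ 2) := by
  have hcont : Continuous (fun t => ‖f t‖ ^ 2) := by fun_prop
  refine hcont.integrable_of_hasCompactSupport (hfs.mono fun t ht h0 => ht ?_)
  simp [h0]

/-- The coercivity estimate at the core of Proposition 5 of the paper: if
`-Im(e^{2iβ}(q(x) - z)) ≥ c` on `(a, ∞)`, then for every `C²` function `u`
with compact support in `(a, ∞)` one has
`‖-ħ²e^{-2iβ}u'' + (q - z)u‖_{L²} ≥ c ‖u‖_{L²}`. -/
theorem dilated_exterior_coercivity
    (hbar : ℝ) (hhbar : 0 < hbar) (β : ℝ) (a : ℝ) (z : ℂ) (c : ℝ) (hc : 0 < c)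
    (q : ℝ → ℂ) (hq : ContinuousOn q (Set.Ioi a))
    (hcoer : ∀ x : ℝ, a < x →
      c ≤ -(Complex.exp (2 * Complex.I * (β : ℂ)) * (q x - z)).im) :
    ∀ u : ℝ → ℂ, ContDiff ℝ 2 u → HasCompactSupport u →
      tsupport u ⊆ Set.Ioi a →
      c * Real.sqrt (∫ t : ℝ, ‖u t‖ ^ 2) ≤
        Real.sqrt (∫ t : ℝ,
          ‖-(hbar : ℂ) ^ 2 * Complex.exp (-2 * Complex.I * (β : ℂ)) *
              iteratedDeriv 2 u t + (q t - z) * u t‖ ^ 2) := by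
  intro u hu hs hsupp
  obtain ⟨hI, hI0⟩ := integral_im_iteratedDeriv_two_mul_conj u hu hs
  have hw : Continuous (iteratedDeriv 2 u) := hu.continuous_iteratedDeriv 2 le_rfl
  have hws : HasCompactSupport (iteratedDeriv 2 u) := by
    rw [iteratedDeriv_succ, iteratedDeriv_one]
    exact hs.deriv.deriv
  -- `q` is arbitrary off `(a, ∞)`, where `u` vanishes; the product is continuous because
  -- the closed support of `u` lies inside `(a, ∞)`.
  have hqu : Continuous fun t => (q t - z) * u t := by
    refine ContinuousOn.continuous_of_tsupport_subset
      ((hq.sub continuousOn_const).mul hu.continuous.continuousOn) isOpen_Ioi ?_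
    exact (tsupport_mul_subset_right (f := fun t => q t - z) (g := u)).trans hsupp
  have hqs : HasCompactSupport fun t => (q t - z) * u t := hs.mul_left
  set F : ℝ → ℂ := fun t => -(hbar : ℂ) ^ 2 * Complex.exp (-2 * Complex.I * (β : ℂ)) *
    iteratedDeriv 2 u t + (q t - z) * u t with hF
  have hFc : Continuous F := (continuous_const.mul hw).add hqu
  have hFs : HasCompactSupport F :=
    (hws.mul_left (f := fun _ => -(hbar : ℂ) ^ 2 * Complex.exp (-2 * Complex.I * (β : ℂ)))).add hqs
  have hFi := integrable_norm_sq hFc hFs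
  have key : c ^ 2 * ∫ t : ℝ, ‖u t‖ ^ 2 ≤ ∫ t : ℝ, ‖F t‖ ^ 2 := by
    have hpt : ∀ t, c ^ 2 * ‖u t‖ ^ 2 ≤ ‖F t‖ ^ 2 -
        2 * c * hbar ^ 2 * (iteratedDeriv 2 u t * (starRingEnd ℂ) (u t)).im := fun t => by
      refine coercivity_pointwise (Complex.exp (2 * Complex.I * (β : ℂ)))
        (Complex.exp (-2 * Complex.I * (β : ℂ))) (u t) (iteratedDeriv 2 u t) (q t - z) hbar c hc
        ?_ ?_ ?_
      · rw [← Complex.exp_add, ← Complex.exp_zero]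
        congr 1
        ring
      · rw [Complex.norm_exp]
        simp
      · by_cases h0 : u t = 0
        · exact Or.inl h0
        · exact Or.inr (hcoer t (hsupp (subset_tsupport u h0)))
    have hJ := hI.const_mul (2 * c * hbar ^ 2)
    have hmono := integral_mono ((integrable_norm_sq hu.continuous hs).const_mul (c ^ 2)) (hFi.sub hJ) hpt
    rw [integral_const_mul, integral_sub' hFi hJ, integral_const_mul, hI0, mul_zero,
      sub_zero] at hmono
    exact hmono
  calc c * Real.sqrt (∫ t : ℝ, ‖u t‖ ^ 2)
      = Real.sqrt (c ^ 2 * ∫ t : ℝ, ‖u t‖ ^ 2) := by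
        rw [Real.sqrt_mul (sq_nonneg c), Real.sqrt_sq hc.le]
    _ ≤ _ := Real.sqrt_le_sqrt key
end

section
/- Let ω ∈ ℝ, β₀ ∈ (0, π/4), and M > 0. Let W be a complex-differentiable (holomorphic) function on an open set containing the sector Σ = {ω + r e^{iθ} : r > 0, 0 ≤ θ ≤ β₀}, real-valued on (ω, ∞), and suppose that for all ζ ∈ Σ: |W(ζ)| ≤ M, |W'(ζ)| ≤ M/(1 + |ζ − ω|), and |W''(ζ)| ≤ M/(1 + |ζ − ω|)². Then there is a constant C, depending only on β₀, such that for all β ∈ (0, β₀] and all s > 0: | Im( e^{2iβ} W(ω + e^{iβ} s) ) − β·( 2·W(ω + s) + s·W'(ω + s) ) | ≤ C·M·β². -/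
/-!
Put `E t = e^{it}`, `z t = ω + E t · s` and `g t = E(t)² W(z t)`, so that `g 0 = W(ω + s)` is real.
Differentiating twice,
`g' = i (2 E² W(z) + s E³ W'(z))` and `g'' = -(4 E² W(z) + 5 s E³ W'(z) + s² E⁴ W''(z))`.
Since `|E| = 1` and `|z t - ω| = s`, the hypotheses give `|g''| ≤ (4 + 5 + 1) M`, because
`s / (1 + s) ≤ 1`. A first-order Taylor estimate (`norm_sub_taylor_one_le`) then yields
`|g β - g 0 - β g' 0| ≤ 10 M β²`, and the claim is the imaginary part of this estimate.
In particular the constant `10` works for every opening angle.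
-/

/-- The closed sector `{ω + r e^{iθ} : r > 0, 0 ≤ θ ≤ β₀}` based at the real
point `ω`. -/
def dilationSector (ω β₀ : ℝ) : Set ℂ :=
  {ζ : ℂ | ∃ r : ℝ, 0 < r ∧ ∃ θ : ℝ, θ ∈ Set.Icc 0 β₀ ∧
    ζ = (ω : ℂ) + (r : ℂ) * Complex.exp (Complex.I * (θ : ℂ))}

/-- First-order Taylor estimate on `[0, b]`, by applying the mean value inequality twice; the
constant `K` in place of the sharp `K / 2` suffices. -/
lemma norm_sub_taylor_one_le {g g1 g2 : ℝ → ℂ} {b K : ℝ} (hb : 0 ≤ b)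
    (hg : ∀ t ∈ Set.Icc 0 b, HasDerivAt g (g1 t) t)
    (hg1 : ∀ t ∈ Set.Icc 0 b, HasDerivAt g1 (g2 t) t)
    (hK : ∀ t ∈ Set.Icc 0 b, ‖g2 t‖ ≤ K) :
    ‖g b - g 0 - b * g1 0‖ ≤ K * b ^ 2 := by
  have hK0 : 0 ≤ K := (norm_nonneg _).trans (hK 0 ⟨le_rfl, hb⟩)
  have h1 : ∀ t ∈ Set.Icc 0 b, ‖g1 t - g1 0‖ ≤ K * b := fun t ht => by
    have := norm_image_sub_le_of_norm_deriv_le_segment'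
      (fun u hu => (hg1 u hu).hasDerivWithinAt) (fun u hu => hK u ⟨hu.1, hu.2.le⟩) t ht
    refine this.trans ?_
    rw [sub_zero]
    exact mul_le_mul_of_nonneg_left ht.2 hK0
  have h2 : ∀ t ∈ Set.Icc 0 b,
      HasDerivAt (fun u : ℝ => g u - u * g1 0) (g1 t - g1 0) t := fun t ht => by
    simpa using (hg t ht).fun_sub ((Complex.ofRealCLM.hasDerivAt (x := t)).mul_const (g1 0))
  have h3 := norm_image_sub_le_of_norm_deriv_le_segment'
    (fun u hu => (h2 u hu).hasDerivWithinAt) (fun u hu => h1 u ⟨hu.1, hu.2.le⟩) b ⟨hb, le_rfl⟩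
  calc ‖g b - g 0 - b * g1 0‖ = ‖g b - b * g1 0 - (g 0 - (0 : ℝ) * g1 0)‖ := by
        congr 1; push_cast; ring
    _ ≤ K * b * (b - 0) := h3
    _ = K * b ^ 2 := by ring

/-- First-order Taylor expansion, in the dilation parameter `β`, of the
exterior-dilated potential term `e^{2iβ} W(ω + e^{iβ} s)` (proof of
Proposition 5 of the paper), with error `O(β²)` uniform in `s > 0`, for `W`
holomorphic and suitably bounded on a sector and real on `(ω, ∞)`. -/
theorem dilated_potential_first_order
    (β₀ : ℝ) (hβ₀ : β₀ ∈ Set.Ioo 0 (Real.pi / 4)) :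
    ∃ C : ℝ, 0 < C ∧
      ∀ (ω M : ℝ) (W : ℂ → ℂ) (Uo : Set ℂ), 0 < M → IsOpen Uo →
        dilationSector ω β₀ ⊆ Uo → DifferentiableOn ℂ W Uo →
        (∀ s : ℝ, 0 < s → (W ((ω : ℂ) + (s : ℂ))).im = 0) →
        (∀ ζ ∈ dilationSector ω β₀,
          ‖W ζ‖ ≤ M ∧ ‖deriv W ζ‖ ≤ M / (1 + ‖ζ - (ω : ℂ)‖) ∧
            ‖deriv (deriv W) ζ‖ ≤ M / (1 + ‖ζ - (ω : ℂ)‖) ^ 2) →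
        ∀ β : ℝ, β ∈ Set.Ioc 0 β₀ → ∀ s : ℝ, 0 < s →
          |(Complex.exp (2 * Complex.I * (β : ℂ)) *
                W ((ω : ℂ) + Complex.exp (Complex.I * (β : ℂ)) * (s : ℂ))).im
              - β * (2 * (W ((ω : ℂ) + (s : ℂ))).re
                  + s * (deriv W ((ω : ℂ) + (s : ℂ))).re)|
            ≤ C * M * β ^ 2 := by
  refine ⟨10, by norm_num, ?_⟩
  intro ω M W Uo hM hUo hsub hW hreal hbd β hβ s hs
  set E : ℝ → ℂ := fun t => Complex.exp (Complex.I * (t : ℂ)) with hE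
  have hE0 : E 0 = 1 := by simp [hE]
  have hEn : ∀ t, ‖E t‖ = 1 := fun t => by
    simp only [hE]
    rw [mul_comm]
    exact Complex.norm_exp_ofReal_mul_I t
  have hEd : ∀ t, HasDerivAt E (Complex.I * E t) t := fun t => by
    have h := ((Complex.ofRealCLM.hasDerivAt (x := t)).const_mul Complex.I).cexp
    simpa [hE, mul_comm] using h
  set z : ℝ → ℂ := fun t => (ω : ℂ) + E t * (s : ℂ) with hz
  have hzd : ∀ t, HasDerivAt z (Complex.I * E t * s) t := fun t =>
    ((hEd t).mul_const (s : ℂ)).const_add (ω : ℂ)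
  have hzn : ∀ t, ‖z t - ω‖ = s := fun t => by
    simp [hz, hEn, abs_of_pos hs]
  have hzS : ∀ t ∈ Set.Icc 0 β, z t ∈ dilationSector ω β₀ := fun t ht =>
    ⟨s, hs, t, ⟨ht.1, ht.2.trans hβ.2⟩, by simp only [hz, hE]; ring⟩
  have hWz : ∀ t ∈ Set.Icc 0 β,
      HasDerivAt (fun u => W (z u)) (deriv W (z t) * (Complex.I * E t * s)) t := fun t ht =>
    ((hW.differentiableAt (hUo.mem_nhds (hsub (hzS t ht)))).hasDerivAt).comp t (hzd t)
  have hWz' : ∀ t ∈ Set.Icc 0 β,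
      HasDerivAt (fun u => deriv W (z u))
        (deriv (deriv W) (z t) * (Complex.I * E t * s)) t := fun t ht =>
    (((hW.deriv hUo).differentiableAt
      (hUo.mem_nhds (hsub (hzS t ht)))).hasDerivAt).comp t (hzd t)
  have key := norm_sub_taylor_one_le (b := β) (K := 10 * M)
    (g := fun t => E t ^ 2 * W (z t))
    (g1 := fun t => Complex.I * (2 * (E t ^ 2 * W (z t)) + s * (E t ^ 3 * deriv W (z t))))
    (g2 := fun t => -(4 * (E t ^ 2 * W (z t)) + 5 * (s * (E t ^ 3 * deriv W (z t)))
      + s ^ 2 * (E t ^ 4 * deriv (deriv W) (z t)))) hβ.1.le ?_ ?_ ?_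
  · have him := (Complex.abs_im_le_norm _).trans key
    have hz0 : z 0 = (ω : ℂ) + s := by simp [hz, hE0]
    have hexp : Complex.exp (2 * Complex.I * (β : ℂ)) = E β ^ 2 := by
      simp only [hE]
      rw [← Complex.exp_nat_mul]
      congr 1; push_cast; ring
    rw [hexp]
    refine le_of_eq_of_le (congrArg abs ?_) him
    have hzβ : (ω : ℂ) + Complex.exp (Complex.I * (β : ℂ)) * (s : ℂ) = z β := rfl
    rw [hzβ, hz0]
    simp [hE0, hreal s hs]
  · intro t ht
    refine (((hEd t).fun_pow 2).fun_mul (hWz t ht)).congr_deriv ?_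
    push_cast
    ring
  · intro t ht
    refine ((((((hEd t).fun_pow 2).fun_mul (hWz t ht)).const_mul 2).fun_add
      ((((hEd t).fun_pow 3).fun_mul (hWz' t ht)).const_mul (s : ℂ))).const_mul Complex.I).congr_deriv ?_
    push_cast
    ring_nf
    simp only [Complex.I_sq]
    ring
  · intro t ht
    obtain ⟨b0, b1, b2⟩ := hbd _ (hzS t ht)
    rw [hzn] at b1 b2
    have hs1 : 0 < 1 + s := by linarith
    have c1 : s * ‖deriv W (z t)‖ ≤ M := by
      rw [le_div_iff₀ hs1] at b1
      nlinarith [norm_nonneg (deriv W (z t))]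
    have c2 : s ^ 2 * ‖deriv (deriv W) (z t)‖ ≤ M := by
      rw [le_div_iff₀ (by positivity)] at b2
      nlinarith [norm_nonneg (deriv (deriv W) (z t)),
        mul_nonneg hs.le (norm_nonneg (deriv (deriv W) (z t)))]
    rw [norm_neg]
    refine (norm_add₃_le).trans ?_
    simp only [norm_mul, norm_pow, hEn, Complex.norm_real, Real.norm_eq_abs, abs_of_pos hs,
      one_pow, one_mul, Complex.norm_ofNat]
    linarith
end

section
/- Let a < x_t < b, E ∈ ℝ, and let V : (a, b) → ℝ be continuous with V(x) > E for x ∈ (a, x_t), V(x_t) = E, and V(x) < E for x ∈ (x_t, b). Define S(x) := ∫_{min(x, x_t)}^{max(x, x_t)} √|V(t) − E| dt and ξ(x) := sgn(x − x_t)·( (3/2)·S(x) )^{2/3}. Then ξ(x_t) = 0, ξ is strictly increasing on (a,b), ξ is differentiable at every x ∈ (a, b) with x ≠ x_t, and at every such x one has ξ(x)·(ξ'(x))² = E − V(x) with ξ'(x) > 0. -/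
open intervalIntegral

/-! With `f t = √|V t - E|`, the signed action `F x = ∫ t in xt..x, f t` is a primitive of the
continuous function `f` on `(a, b)`. Since `f` vanishes only at the turning point, `F` is strictly
increasing on each side of `xt`, and it vanishes at `xt`. Moreover `ξ = (3/2 * F) ^ (2/3)` to the
right of `xt` and `ξ = -(3/2 * (-F)) ^ (2/3)` to the left, so monotonicity on each side follows
from that of `F` and of `u ↦ u ^ (2/3)`. The chain rule gives `ξ' = f * u ^ (-1/3)` with
`u = 3/2 * |F| > 0`, hence `|ξ| * ξ' ^ 2 = f ^ 2 = |V - E|`, and the sign of `ξ` is that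
of `E - V`. -/

/-- The power identity behind `|ξ| * ξ' ^ 2 = f ^ 2`. -/
lemma rpow_two_thirds_mul_sq {u : ℝ} (hu : 0 < u) :
    u ^ ((2 : ℝ) / 3) * (u ^ ((2 : ℝ) / 3 - 1)) ^ 2 = 1 := by
  rw [← Real.rpow_natCast, ← Real.rpow_mul hu.le, ← Real.rpow_add hu]
  norm_num

/-- The derivative of `(3/2 * G) ^ (2/3)` where `G > 0`; it is applied to the action on each side
of the turning point. -/
lemma hasDerivAt_two_thirds {G : ℝ → ℝ} {x g : ℝ} (hG : HasDerivAt G g x) (hx : 0 < G x) :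
    HasDerivAt (fun y => (3 / 2 * G y) ^ ((2 : ℝ) / 3))
      (g * (3 / 2 * G x) ^ ((2 : ℝ) / 3 - 1)) x := by
  have h := (hG.const_mul (3 / 2)).rpow_const (p := (2 : ℝ) / 3) (Or.inl (by positivity))
  convert h using 1
  ring

/-- The Liouville transformation of Appendix B of the paper: near a simple
turning point `xt`, the variable `ξ = sgn(x − xt)((3/2)S(x))^{2/3}` vanishes at
`xt`, is strictly increasing, and satisfies `ξ (ξ')² = E − V` with `ξ' > 0`
away from the turning point. -/
theorem liouville_transformation
    (a b xt E : ℝ) (haxt : a < xt) (hxtb : xt < b)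
    (V : ℝ → ℝ) (hV : ContinuousOn V (Set.Ioo a b))
    (hleft : ∀ x ∈ Set.Ioo a xt, E < V x) (hturn : V xt = E)
    (hright : ∀ x ∈ Set.Ioo xt b, V x < E) :
    let S : ℝ → ℝ := fun x => ∫ t in (min x xt)..(max x xt), Real.sqrt |V t - E|
    let ξ : ℝ → ℝ := fun x => Real.sign (x - xt) * ((3 / 2) * S x) ^ ((2 : ℝ) / 3)
    ξ xt = 0 ∧ StrictMonoOn ξ (Set.Ioo a b) ∧
      ∀ x ∈ Set.Ioo a b, x ≠ xt →
        DifferentiableAt ℝ ξ x ∧ ξ x * deriv ξ x ^ 2 = E - V x ∧ 0 < deriv ξ x := by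
  intro S ξ
  set f : ℝ → ℝ := fun t => Real.sqrt |V t - E| with hf
  set F : ℝ → ℝ := fun x => ∫ t in xt..x, f t with hF
  have hxt : xt ∈ Set.Ioo a b := ⟨haxt, hxtb⟩
  have hfc : ContinuousOn f (Set.Ioo a b) := (hV.sub continuousOn_const).abs.sqrt
  have hFd : ∀ x ∈ Set.Ioo a b, HasDerivAt F (f x) x := by
    intro x hx
    apply integral_hasDerivAt_right
    · exact (hfc.mono (Set.ordConnected_Ioo.uIcc_subset hxt hx)).intervalIntegrable
    · exact hfc.stronglyMeasurableAtFilter isOpen_Ioo x hx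
    · exact hfc.continuousAt (isOpen_Ioo.mem_nhds hx)
  have hF0 : F xt = 0 := integral_same
  have hfsq : ∀ x, f x ^ 2 = |V x - E| := fun x => Real.sq_sqrt (abs_nonneg _)
  have hfl : ∀ x ∈ Set.Ioo a xt, 0 < f x := fun x hx =>
    Real.sqrt_pos.2 (abs_pos.2 (sub_ne_zero.2 (hleft x hx).ne'))
  have hfr : ∀ x ∈ Set.Ioo xt b, 0 < f x := fun x hx =>
    Real.sqrt_pos.2 (abs_pos.2 (sub_ne_zero.2 (hright x hx).ne))
  have hFl : StrictMonoOn F (Set.Ioc a xt) := by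
    have hsub : ∀ x ∈ Set.Ioc a xt, x ∈ Set.Ioo a b := fun x hx => ⟨hx.1, hx.2.trans_lt hxtb⟩
    apply strictMonoOn_of_deriv_pos (convex_Ioc a xt)
    · exact fun x hx => (hFd x (hsub x hx)).continuousAt.continuousWithinAt
    · intro x hx
      rw [interior_Ioc] at hx
      rw [(hFd x (hsub x ⟨hx.1, hx.2.le⟩)).deriv]
      exact hfl x hx
  have hFr : StrictMonoOn F (Set.Ico xt b) := by
    have hsub : ∀ x ∈ Set.Ico xt b, x ∈ Set.Ioo a b := fun x hx => ⟨haxt.trans_le hx.1, hx.2⟩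
    apply strictMonoOn_of_deriv_pos (convex_Ico xt b)
    · exact fun x hx => (hFd x (hsub x hx)).continuousAt.continuousWithinAt
    · intro x hx
      rw [interior_Ico] at hx
      rw [(hFd x (hsub x ⟨hx.1.le, hx.2⟩)).deriv]
      exact hfr x hx
  have hξ0 : ξ xt = 0 := by simp [ξ]
  -- Both one-sided formulas include `xt` itself, because `(3/2 * 0) ^ (2/3) = 0`.
  have hξr : ∀ x, xt ≤ x → ξ x = (3 / 2 * F x) ^ ((2 : ℝ) / 3) := by
    intro x hx
    rcases hx.eq_or_lt with rfl | hlt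
    · rw [hξ0, hF0, mul_zero, Real.zero_rpow (by norm_num)]
    · simp only [ξ, S, min_eq_right hx, max_eq_left hx, Real.sign_of_pos (sub_pos.2 hlt), one_mul,
        hF, hf]
  have hξl : ∀ x, x ≤ xt → ξ x = -(3 / 2 * -F x) ^ ((2 : ℝ) / 3) := by
    intro x hx
    rcases hx.eq_or_lt with rfl | hlt
    · rw [hξ0, hF0, neg_zero, mul_zero, Real.zero_rpow (by norm_num), neg_zero]
    · simp only [ξ, S, min_eq_left hx, max_eq_right hx, Real.sign_of_neg (sub_neg.2 hlt), hF, hf,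
        ← integral_symm, neg_one_mul]
  have hFneg : ∀ x ∈ Set.Ioo a xt, 0 < -F x := by
    intro x hx
    have := hFl ⟨hx.1, hx.2.le⟩ ⟨haxt, le_rfl⟩ hx.2
    linarith
  have hFpos : ∀ x ∈ Set.Ioo xt b, 0 < F x := by
    intro x hx
    have := hFr ⟨le_rfl, hxtb⟩ ⟨hx.1.le, hx.2⟩ hx.1
    linarith
  refine ⟨hξ0, ?_, ?_⟩
  · have hml : StrictMonoOn ξ (Set.Ioc a xt) := by
      intro x hx y hy hxy
      rw [hξl x hx.2, hξl y hy.2]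
      have h1 := hFl hx hy hxy
      have h2 := hFl.monotoneOn hy ⟨haxt, le_rfl⟩ hy.2
      exact neg_lt_neg (Real.rpow_lt_rpow (by linarith) (by linarith) (by norm_num))
    have hmr : StrictMonoOn ξ (Set.Ico xt b) := by
      intro x hx y hy hxy
      rw [hξr x hx.1, hξr y hy.1]
      have h1 := hFr hx hy hxy
      have h2 := hFr.monotoneOn ⟨le_rfl, hxtb⟩ hx hx.1
      exact Real.rpow_lt_rpow (by linarith) (by linarith) (by norm_num)
    rw [← Set.Ioc_union_Ico_eq_Ioo haxt hxtb]
    exact hml.union hmr ⟨⟨haxt, le_rfl⟩, fun y hy => hy.2⟩ ⟨⟨le_rfl, hxtb⟩, fun y hy => hy.1⟩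
  · intro x hx hne
    rcases lt_or_gt_of_ne hne with hlt | hgt
    · have hG := hFneg x ⟨hx.1, hlt⟩
      have hd : HasDerivAt ξ (f x * (3 / 2 * -F x) ^ ((2 : ℝ) / 3 - 1)) x := by
        have h := (hasDerivAt_two_thirds (hFd x hx).neg hG).neg
        rw [neg_mul, neg_neg] at h
        refine h.congr_of_eventuallyEq ?_
        filter_upwards [Iio_mem_nhds hlt] with y hy
        exact hξl y hy.le
      refine ⟨hd.differentiableAt, ?_, ?_⟩
      · have hV' := hleft x ⟨hx.1, hlt⟩
        have hsq := hfsq x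
        rw [abs_of_pos (sub_pos.2 hV')] at hsq
        rw [hd.deriv, hξl x hlt.le, mul_pow]
        linear_combination
          -(f x ^ 2) * rpow_two_thirds_mul_sq (u := 3 / 2 * -F x) (by positivity) - hsq
      · rw [hd.deriv]
        exact mul_pos (hfl x ⟨hx.1, hlt⟩) (Real.rpow_pos_of_pos (by positivity) _)
    · have hG := hFpos x ⟨hgt, hx.2⟩
      have hd : HasDerivAt ξ (f x * (3 / 2 * F x) ^ ((2 : ℝ) / 3 - 1)) x := by
        refine (hasDerivAt_two_thirds (hFd x hx) hG).congr_of_eventuallyEq ?_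
        filter_upwards [Ioi_mem_nhds hgt] with y hy
        exact hξr y hy.le
      refine ⟨hd.differentiableAt, ?_, ?_⟩
      · have hV' := hright x ⟨hgt, hx.2⟩
        have hsq := hfsq x
        rw [abs_of_neg (sub_neg.2 hV')] at hsq
        rw [hd.deriv, hξr x hgt.le, mul_pow]
        linear_combination
          (f x ^ 2) * rpow_two_thirds_mul_sq (u := 3 / 2 * F x) (by positivity) + hsq
      · rw [hd.deriv]
        exact mul_pos (hfr x ⟨hgt, hx.2⟩) (Real.rpow_pos_of_pos (by positivity) _)
end
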